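/- For every τ ∈ ℍ and every z ∈ ℂ with z ∉ ℤτ + ℤ: 8·( (θ₂(τ,z)/θ₂(τ,0))² + (θ₃(τ,z)/θ₃(τ,0))² + (θ₄(τ,z)/θ₄(τ,0))² ) = (θ₁(τ,z)²/η(τ)³)·( 24·μ(τ,z) + H(τ) ), where H(τ) = (−2E₂(τ) + 48F₂^{(2)}(τ))/η(τ)³. That is, the K3 elliptic genus Z(τ,z) decomposes into N=4 superconformal characters with massless multiplicity a = 24 and massive part H(τ) = 2q^{−1/8}(−1 + 45q + 231q² + …). -/

import Mathlib

/-!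
Divide the identity by `θ₁²/η⁶` and move everything to one side. The resulting function `Tf τ z` is
invariant under `z ↦ z + 1` and `z ↦ z + τ` (`Tf_shift`), because all `θ_i²` have the same automorphy
factor and `μ` is invariant. Its only possible pole on the torus `ℂ/(ℤ + ℤτ)` is at `z = 0`, where
`8 · 3/θ₁²` meets the pole of `24 μ`. It is shown to be holomorphic there with value zero; then
Liouville's theorem (in the form of the maximum principle, `Sf_eq_zero`) gives `Tf = 0`.

To handle the singularity, put `y = e^{2πiz}` and `w = 2 - y - y⁻¹`. Each quotient
`(θ_i(z)/θ_i(0))²`, `i = 2, 3, 4`, and `θ₁²/(η⁶ w)` is an entire function of `w`, a product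
`∏ (1 + c_n w)` (`sym_prod`) or such a product times an elementary factor, and the Appell sum is
`1/(1-y) + (1-y⁻¹) kSum` with `kSum` regular at `y = 1` (`apSum_eq`). Hence `Tf` equals
`Sf = (Nf(w)/w)/R² - 24 kSum/R + 2E₂ - 48 F₂^{(2)}`, where `R = W q (-q) w` is the product in `θ₁` and
`Nf` is entire with `Nf(0) = 0` (`Tf_eq_Sf`).

The value at `y = 1` needs `Nf'(0)`, which is `24 ∑ σ₁(n) qⁿ - 2` since the logarithmic derivatives
are Lambert series (`sum_cf_even`), and `kSum` at `y = 1`, which is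
`-2 F₂^{(2)} - ∑ σ₁(n) qⁿ` (`kt_add_ft`). The latter is a rearrangement: both double series are
indexed by pairs of an odd and an even number, sorted by size. With
`E₂ = 1 - 24 ∑ σ₁(n) qⁿ` everything cancels (`Sf_one`).
-/

/-! ### The functions in the statement -/

/-- `q = e^{2πiτ}`. -/
noncomputable def qc (τ : ℂ) : ℂ := Complex.exp (2 * Real.pi * Complex.I * τ)

/-- The Dedekind eta function `η(τ) = e^{πiτ/12} ∏_{n ≥ 1} (1 - q^n)`. -/
noncomputable def eta (τ : ℂ) : ℂ :=
  Complex.exp (Real.pi * Complex.I * τ / 12) * ∏' n : ℕ, (1 - qc τ ^ (n + 1))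

/-- `σ₁(k)`, the sum of the divisors of `k`. -/
def sigma1 (k : ℕ) : ℕ := ∑ d ∈ k.divisors, d

/-- The quasimodular Eisenstein series `E₂(τ) = 1 - 24 ∑_{k ≥ 1} σ₁(k) q^k`. -/
noncomputable def E2 (τ : ℂ) : ℂ :=
  1 - 24 * ∑' k : ℕ, (sigma1 (k + 1) : ℂ) * qc τ ^ (k + 1)

/-- `F₂^{(2)}(τ) = ∑_{r > s > 0, r - s odd} (-1)^r s q^{rs/2}`. -/
noncomputable def F2two (τ : ℂ) : ℂ :=
  ∑' p : ℕ × ℕ, if p.2 < p.1 ∧ 0 < p.2 ∧ (p.1 - p.2) % 2 = 1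
    then (-1 : ℂ) ^ p.1 * (p.2 : ℂ) * qc τ ^ (p.1 * p.2 / 2) else 0

/-- `θ₁(τ,z) = -i q^{1/8} y^{1/2} ∏_{n≥1}(1-qⁿ)(1-yqⁿ)(1-y⁻¹q^{n-1})`. -/
noncomputable def theta1 (τ z : ℂ) : ℂ :=
  -Complex.I * Complex.exp (Real.pi * Complex.I * τ / 4) *
    Complex.exp (Real.pi * Complex.I * z) *
    ∏' n : ℕ, ((1 - qc τ ^ (n + 1)) * (1 - qc z * qc τ ^ (n + 1)) *
      (1 - (qc z)⁻¹ * qc τ ^ n))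

/-- `θ₂(τ,z) = q^{1/8} y^{1/2} ∏_{n≥1}(1-qⁿ)(1+yqⁿ)(1+y⁻¹q^{n-1})`. -/
noncomputable def theta2 (τ z : ℂ) : ℂ :=
  Complex.exp (Real.pi * Complex.I * τ / 4) * Complex.exp (Real.pi * Complex.I * z) *
    ∏' n : ℕ, ((1 - qc τ ^ (n + 1)) * (1 + qc z * qc τ ^ (n + 1)) *
      (1 + (qc z)⁻¹ * qc τ ^ n))

/-- `θ₃(τ,z) = ∏_{n≥1}(1-qⁿ)(1+yq^{n-1/2})(1+y⁻¹q^{n-1/2})`. -/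
noncomputable def theta3 (τ z : ℂ) : ℂ :=
  ∏' n : ℕ, ((1 - qc τ ^ (n + 1)) *
    (1 + qc z * Complex.exp (2 * Real.pi * Complex.I * ((n : ℂ) + 1 / 2) * τ)) *
    (1 + (qc z)⁻¹ * Complex.exp (2 * Real.pi * Complex.I * ((n : ℂ) + 1 / 2) * τ)))

/-- `θ₄(τ,z) = ∏_{n≥1}(1-qⁿ)(1-yq^{n-1/2})(1-y⁻¹q^{n-1/2})`. -/
noncomputable def theta4 (τ z : ℂ) : ℂ :=
  ∏' n : ℕ, ((1 - qc τ ^ (n + 1)) *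
    (1 - qc z * Complex.exp (2 * Real.pi * Complex.I * ((n : ℂ) + 1 / 2) * τ)) *
    (1 - (qc z)⁻¹ * Complex.exp (2 * Real.pi * Complex.I * ((n : ℂ) + 1 / 2) * τ)))

/-- The Appell–Lerch sum
`μ(τ,z) = (-i y^{1/2}/θ₁(τ,z)) ∑_{ℓ∈ℤ} (-1)^ℓ y^ℓ q^{ℓ(ℓ+1)/2}/(1-yq^ℓ)`. -/
noncomputable def appellMu (τ z : ℂ) : ℂ :=
  -Complex.I * Complex.exp (Real.pi * Complex.I * z) / theta1 τ z *
    ∑' l : ℤ, (-1 : ℂ) ^ l * qc z ^ l * qc τ ^ (l * (l + 1) / 2) /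
      (1 - qc z * qc τ ^ l)

/-! ### Infinite products -/

/-- The entire function `w ↦ ∏ (1 + c_n w)` attached to a summable sequence `c`. -/
noncomputable def wprod (c : ℕ → ℂ) (w : ℂ) : ℂ := ∏' n, (1 + c n * w)

theorem wprod_zero (c : ℕ → ℂ) : wprod c 0 = 1 := by simp [wprod]

theorem wprod_mulLoc {c : ℕ → ℂ} (hc : Summable fun n => ‖c n‖) (r : ℝ) :
    HasProdLocallyUniformlyOn (fun n w => 1 + c n * w) (wprod c) (Metric.ball 0 r) := by
  refine (hc.mul_right r).hasProdLocallyUniformlyOn_nat_one_add (f := fun n w => c n * w)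
    Metric.isOpen_ball (.of_forall fun n x hx => ?_) (fun n => by fun_prop)
  rw [norm_mul]
  have : ‖x‖ < r := by simpa using hx
  gcongr

theorem wprod_differentiable {c : ℕ → ℂ} (hc : Summable fun n => ‖c n‖) :
    Differentiable ℂ (wprod c) := by
  intro w
  have h := (wprod_mulLoc hc (‖w‖ + 1)).differentiableOn
    (.of_forall fun s => by
      simpa [Finset.prod_fn] using DifferentiableOn.finsetProd (fun _ _ => by fun_prop))
    Metric.isOpen_ball
  exact (h w (by simp)).differentiableAt (Metric.isOpen_ball.mem_nhds (by simp))

theorem wprod_ne_zero {c : ℕ → ℂ} (hc : Summable fun n => ‖c n‖) {w : ℂ}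
    (h : ∀ n, 1 + c n * w ≠ 0) : wprod c w ≠ 0 :=
  tprod_one_add_ne_zero_of_summable h (by simpa using hc.mul_right ‖w‖)

/-- The logarithmic derivative of `∏ (1 + c_n w)` at `w = 0`, where the product equals `1`. -/
theorem wprod_hasDerivAt {c : ℕ → ℂ} (hc : Summable fun n => ‖c n‖) :
    HasDerivAt (wprod c) (∑' n, c n) 0 := by
  have hd : ∀ n, logDeriv (fun w => 1 + c n * w) 0 = c n := by
    intro n
    simp [logDeriv_apply, deriv_const_mul_id']
  have h := logDeriv_tprod_eq_tsum (f := fun n w => 1 + c n * w) (x := 0)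
    (Metric.isOpen_ball (x := (0 : ℂ)) (ε := 1)) (by simp) (by simp) (fun n => by fun_prop)
    (by simpa [hd] using hc.of_norm) ⟨_, wprod_mulLoc hc 1⟩ (by simp)
  have h2 : deriv (wprod c) 0 = ∑' n, c n := by
    simp only [hd] at h
    rw [← h, logDeriv_apply]
    change _ = _ / wprod c 0
    rw [wprod_zero, div_one]
    rfl
  rw [← h2]
  exact (wprod_differentiable hc 0).hasDerivAt

theorem multipliable_one_sub_of {f : ℕ → ℂ} (hf : Summable fun n => ‖f n‖) :
    Multipliable fun n => 1 - f n := by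
  have := multipliable_one_add_of_summable (f := fun n => - f n) (by simpa using hf)
  simpa [sub_eq_add_neg] using this

theorem summable_norm_mul_pow {q : ℂ} (hq : ‖q‖ < 1) (a : ℂ) :
    Summable fun n : ℕ => ‖a * q ^ n‖ := by
  simpa using (summable_geometric_of_lt_one (norm_nonneg q) hq).mul_left ‖a‖

theorem summable_norm_pow_succ {q : ℂ} (hq : ‖q‖ < 1) :
    Summable fun n : ℕ => ‖q ^ (n + 1)‖ := by
  simpa [pow_succ'] using summable_norm_mul_pow hq q

/-- The `q`-Pochhammer symbol `(a; q)_∞`. -/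
noncomputable def poch (q a : ℂ) : ℂ := ∏' n : ℕ, (1 - a * q ^ n)

theorem poch_succ {q : ℂ} (hq : ‖q‖ < 1) (a : ℂ) : poch q a = (1 - a) * poch q (a * q) := by
  have hm := multipliable_one_sub_of (summable_norm_mul_pow hq (a * q))
  rw [poch, tprod_eq_zero_mul' (by simpa [pow_succ', mul_assoc] using hm)]
  simp [poch, pow_succ', mul_assoc]

/-- The triple product `∏ (1 - qⁿ)(1 - a qⁿ)(1 - a⁻¹ q^{n-1})`. Up to elementary factors the four
theta functions are its values at `a = y, -y, -y q^{-1/2}, y q^{-1/2}`. -/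
noncomputable def tri (q a : ℂ) : ℂ :=
  ∏' n : ℕ, ((1 - q ^ (n + 1)) * (1 - a * q ^ (n + 1)) * (1 - a⁻¹ * q ^ n))

theorem tprod_three {q : ℂ} (hq : ‖q‖ < 1) (a b : ℂ) :
    ∏' n : ℕ, ((1 - q ^ (n + 1)) * (1 - a * q ^ n) * (1 - b * q ^ n)) =
      poch q q * poch q a * poch q b := by
  have h0 := multipliable_one_sub_of (summable_norm_pow_succ hq)
  have h1 := multipliable_one_sub_of (summable_norm_mul_pow hq a)
  have h2 := multipliable_one_sub_of (summable_norm_mul_pow hq b)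
  rw [(h0.mul h1).tprod_mul h2, h0.tprod_mul h1]
  simp [poch, pow_succ']

theorem tri_eq {q : ℂ} (hq : ‖q‖ < 1) (a : ℂ) :
    tri q a = poch q q * poch q (a * q) * poch q a⁻¹ := by
  rw [← tprod_three hq]
  simp [tri, pow_succ', mul_assoc]

/-- Quasi-periodicity of the triple product. -/
theorem tri_shift {q a : ℂ} (hq : ‖q‖ < 1) (hq0 : q ≠ 0) (ha : a ≠ 0) :
    tri q (a * q) = -tri q a / (a * q) := by
  rw [tri_eq hq, tri_eq hq, poch_succ hq (a * q), poch_succ hq (a * q)⁻¹]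
  have : (a * q)⁻¹ * q = a⁻¹ := by field_simp
  rw [this]
  field_simp
  ring

/-- Splitting off the factor `1 - a⁻¹` leaves a product symmetric in `a` and `a⁻¹`. -/
theorem tri_split {q a : ℂ} (hq : ‖q‖ < 1) :
    tri q a = (1 - a⁻¹) * ∏' n : ℕ,
      ((1 - q ^ (n + 1)) * (1 - a * q ^ (n + 1)) * (1 - a⁻¹ * q ^ (n + 1))) := by
  have := tprod_three hq (a * q) (a⁻¹ * q)
  rw [tri_eq hq, poch_succ hq a⁻¹]
  simp only [pow_succ', ← mul_assoc] at this ⊢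
  rw [this]
  ring

/-- The coefficients `-s/(1+s)²` governing `(1 + y s)(1 + y⁻¹ s) = (1+s)² (1 + c w)`,
`w = 2 - y - y⁻¹`. -/
noncomputable def cf (s : ℕ → ℂ) (n : ℕ) : ℂ := -s n / (1 + s n) ^ 2

/-- The value at `y = 1` of the product `∏ (1 - qⁿ)(1 + y s_n)(1 + y⁻¹ s_n)`. -/
noncomputable def c0 (q : ℂ) (s : ℕ → ℂ) : ℂ := ∏' n : ℕ, ((1 - q ^ (n + 1)) * (1 + s n) ^ 2)

theorem cf_summable {s : ℕ → ℂ} (hs : Summable fun n => ‖s n‖) :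
    Summable fun n => ‖cf s n‖ := by
  have h0 : Filter.Tendsto s Filter.atTop (nhds 0) :=
    tendsto_zero_iff_norm_tendsto_zero.2 hs.tendsto_atTop_zero
  have h1 : Filter.Tendsto (fun n => ((1 + s n) ^ 2)⁻¹) Filter.atTop (nhds ((1 + 0) ^ 2)⁻¹) :=
    ((h0.const_add 1).pow 2).inv₀ (by simp)
  rw [← Nat.cofinite_eq_atTop] at h1
  refine (Summable.mul_tendsto_const hs h1).norm.congr fun n => ?_
  rw [cf, div_eq_mul_inv, norm_mul, norm_mul, norm_neg]

theorem one_add_cf {s : ℕ → ℂ} {n : ℕ} (h1 : 1 + s n ≠ 0) {y : ℂ} (hy : y ≠ 0) :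
    (1 + s n) ^ 2 * (1 + cf s n * (2 - y - y⁻¹)) = (1 + y * s n) * (1 + y⁻¹ * s n) := by
  rw [cf]; field_simp; ring

/-- A product symmetric under `y ↦ y⁻¹` is a constant times an entire function of
`w = 2 - y - y⁻¹`. -/
theorem sym_prod {q : ℂ} (hq : ‖q‖ < 1) {s : ℕ → ℂ} (hs : Summable fun n => ‖s n‖)
    (h1 : ∀ n, 1 + s n ≠ 0) {y : ℂ} (hy : y ≠ 0) :
    ∏' n : ℕ, ((1 - q ^ (n + 1)) * (1 + y * s n) * (1 + y⁻¹ * s n)) =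
      c0 q s * wprod (cf s) (2 - y - y⁻¹) := by
  have hA := multipliable_one_sub_of (summable_norm_pow_succ hq)
  have hB := (multipliable_one_add_of_summable hs).pow 2
  have hC : Multipliable fun n => 1 + cf s n * (2 - y - y⁻¹) :=
    multipliable_one_add_of_summable (by simpa using (cf_summable hs).mul_right _)
  rw [c0, wprod, ← (hA.mul hB).tprod_mul hC]
  refine tprod_congr fun n => ?_
  rw [mul_assoc, mul_assoc, ← one_add_cf (h1 n) hy]

theorem c0_ne_zero {q : ℂ} (hq : ‖q‖ < 1) {s : ℕ → ℂ} (hs : Summable fun n => ‖s n‖)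
    (h1 : ∀ n, 1 + s n ≠ 0) : c0 q s ≠ 0 := by
  have hA := multipliable_one_sub_of (summable_norm_pow_succ hq)
  have hB := (multipliable_one_add_of_summable hs)
  rw [c0, hA.tprod_mul (hB.pow 2), hB.tprod_pow]
  refine mul_ne_zero ?_ (pow_ne_zero _ (tprod_one_add_ne_zero_of_summable h1 hs))
  have := tprod_one_add_ne_zero_of_summable (f := fun n => - q ^ (n + 1)) (fun n h => ?_)
    (by simpa using summable_norm_pow_succ hq)
  · simpa [sub_eq_add_neg] using this
  · have h2 : q ^ (n + 1) = 1 := by linear_combination -h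
    have := congrArg norm h2
    rw [norm_pow, norm_one] at this
    exact absurd this (pow_lt_one₀ (norm_nonneg _) hq (by simp)).ne

/-! ### Lambert series and `F₂^{(2)}` -/

/-- The Lambert series `∑ qⁿ/(1-qⁿ)²`. -/
noncomputable def lam (q : ℂ) : ℂ := ∑' n : ℕ, q ^ (n + 1) / (1 - q ^ (n + 1)) ^ 2

theorem norm_pow_succ_lt {q : ℂ} (hq : ‖q‖ < 1) (n : ℕ) : ‖q ^ (n + 1)‖ < 1 := by
  rw [norm_pow]; exact pow_lt_one₀ (norm_nonneg _) hq (by simp)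

theorem one_sub_pow_ne {q : ℂ} (hq : ‖q‖ < 1) (n : ℕ) : 1 - q ^ (n + 1) ≠ 0 := by
  intro h
  have h2 : q ^ (n + 1) = 1 := by linear_combination -h
  have := norm_pow_succ_lt hq n
  rw [h2] at this
  simp at this

theorem hasSum_geom_succ {p : ℂ} (hp : ‖p‖ < 1) : HasSum (fun b : ℕ => p ^ (b + 1)) (p / (1 - p)) := by
  simpa [pow_succ', div_eq_mul_inv] using (hasSum_geometric_of_norm_lt_one hp).mul_left p

theorem hasSum_mul_geom_succ {p : ℂ} (hp : ‖p‖ < 1) :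
    HasSum (fun b : ℕ => ((b : ℂ) + 1) * p ^ (b + 1)) (p / (1 - p) ^ 2) := by
  have := (hasSum_nat_add_iff' (f := fun n : ℕ => (n : ℂ) * p ^ n) 1).2
    (hasSum_coe_mul_geometric_of_norm_lt_one hp)
  simpa using this

theorem summable_pair {q : ℂ} (hq : ‖q‖ < 1) :
    Summable fun c : ℕ × ℕ => ((c.2 : ℂ) + 1) * q ^ ((c.1 + 1) * (c.2 + 1)) := by
  have h := summable_prod_mul_pow 1 hq
  rw [← (Equiv.pnatEquivNat.symm.prodCongr Equiv.pnatEquivNat.symm).summable_iff] at h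
  refine h.congr fun c => ?_
  simp [Equiv.pnatEquivNat]

theorem summable_pair' {q : ℂ} (hq : ‖q‖ < 1) :
    Summable fun c : ℕ × ℕ => ((c.1 : ℂ) + 1) * q ^ ((c.1 + 1) * (c.2 + 1)) := by
  refine ((Equiv.prodComm ℕ ℕ).summable_iff.2 (summable_pair hq)).congr fun c => ?_
  simp [mul_comm]

theorem lam_summable {q : ℂ} (hq : ‖q‖ < 1) :
    Summable fun n : ℕ => q ^ (n + 1) / (1 - q ^ (n + 1)) ^ 2 := by
  refine (summable_pair hq).prod.congr fun n => ?_
  simp only [pow_mul]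
  exact (hasSum_mul_geom_succ (norm_pow_succ_lt hq n)).tsum_eq

theorem lam_eq {q : ℂ} (hq : ‖q‖ < 1) :
    lam q = ∑' c : ℕ × ℕ, ((c.2 : ℂ) + 1) * q ^ ((c.1 + 1) * (c.2 + 1)) := by
  rw [(summable_pair hq).tsum_prod, lam]
  refine tsum_congr fun n => ?_
  simp only [pow_mul]
  exact (hasSum_mul_geom_succ (norm_pow_succ_lt hq n)).tsum_eq.symm

theorem hasSum_lam' {q : ℂ} (hq : ‖q‖ < 1) :
    HasSum (fun n : ℕ => ((n : ℂ) + 1) * (q ^ (n + 1) / (1 - q ^ (n + 1)))) (lam q) := by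
  have h : lam q = ∑' c : ℕ × ℕ, ((c.1 : ℂ) + 1) * q ^ ((c.1 + 1) * (c.2 + 1)) := by
    rw [lam_eq hq, ← (Equiv.prodComm ℕ ℕ).tsum_eq]
    refine tsum_congr fun c => ?_
    simp [mul_comm]
  rw [h]
  refine (summable_pair' hq).hasSum.prod_fiberwise fun n => ?_
  simp only [pow_mul]
  exact (hasSum_geom_succ (norm_pow_succ_lt hq n)).mul_left _

/-- The Lambert series is the nonconstant part of `E₂`. -/
theorem lam_sigma {q : ℂ} (hq : ‖q‖ < 1) :
    ∑' k : ℕ, (sigma1 (k + 1) : ℂ) * q ^ (k + 1) = lam q := by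
  have h := tsum_prod_pow_eq_tsum_sigma 1 hq
  rw [tsum_pnat_eq_tsum_succ
    (f := fun e : ℕ => (ArithmeticFunction.sigma 1 e : ℂ) * q ^ e)] at h
  have h3 : ∑' k : ℕ, (sigma1 (k + 1) : ℂ) * q ^ (k + 1) =
      ∑' k : ℕ, (ArithmeticFunction.sigma 1 (k + 1) : ℂ) * q ^ (k + 1) := by
    refine tsum_congr fun k => ?_
    simp [sigma1, ArithmeticFunction.sigma_one_apply]
  rw [h3, ← h, lam]
  have h4 : ∀ d : ℕ, ∑' c : ℕ+, ((c : ℕ) : ℂ) ^ 1 * q ^ (d * c : ℕ) =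
      ∑' c : ℕ, ((c : ℂ) + 1) * (q ^ d) ^ (c + 1) := by
    intro d
    rw [tsum_pnat_eq_tsum_succ (f := fun c : ℕ => (c : ℂ) ^ 1 * q ^ (d * c : ℕ))]
    refine tsum_congr fun c => ?_
    simp [pow_mul]
  simp only [h4]
  rw [tsum_pnat_eq_tsum_succ (f := fun d : ℕ => ∑' c : ℕ, ((c : ℂ) + 1) * (q ^ d) ^ (c + 1))]
  exact tsum_congr fun n => (hasSum_mul_geom_succ (norm_pow_succ_lt hq n)).tsum_eq

theorem summable_odd1 {q : ℂ} (hq : ‖q‖ < 1) :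
    Summable fun c : ℕ × ℕ => (2 * (c.1 : ℂ) + 1) * q ^ ((2 * c.1 + 1) * (c.2 + 1)) := by
  refine ((summable_pair' hq).comp_injective (i := fun c : ℕ × ℕ => (2 * c.1, c.2)) ?_).congr
    fun c => ?_
  · rintro ⟨a, b⟩ ⟨c, d⟩ h; simpa using h
  · simp

theorem summable_odd2 {q : ℂ} (hq : ‖q‖ < 1) :
    Summable fun c : ℕ × ℕ => ((c.2 : ℂ) + 1) * q ^ ((2 * c.1 + 1) * (c.2 + 1)) := by
  refine ((summable_pair hq).comp_injective (i := fun c : ℕ × ℕ => (2 * c.1, c.2)) ?_).congr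
    fun c => ?_
  · rintro ⟨a, b⟩ ⟨c, d⟩ h; simpa using h
  · simp

theorem inj_even : Function.Injective fun k : ℕ => 2 * k := fun a b h => by simpa using h
theorem inj_odd : Function.Injective fun k : ℕ => 2 * k + 1 := fun a b h => by simpa using h

/-- `∑_{a odd, b} (a - 2b) q^{ab} = -∑ σ₁(n) qⁿ`: removing the even `a` from `∑ a q^{ab}` and from
`∑ b q^{ab}` subtracts multiples of the same series at `q²`. -/
theorem odd_sum {q : ℂ} (hq : ‖q‖ < 1) :
    ∑' c : ℕ × ℕ, (2 * (c.1 : ℂ) + 1 - (2 * c.2 + 2)) * q ^ ((2 * c.1 + 1) * (c.2 + 1)) =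
      -lam q := by
  have hq2 : ‖q ^ 2‖ < 1 := norm_pow_succ_lt hq 1
  have e1 : ∑' c : ℕ × ℕ, (2 * (c.1 : ℂ) + 1) * q ^ ((2 * c.1 + 1) * (c.2 + 1)) =
      lam q - 2 * lam (q ^ 2) := by
    have h := hasSum_lam' hq
    have h2 := tsum_even_add_odd
      (f := fun n : ℕ => ((n : ℂ) + 1) * (q ^ (n + 1) / (1 - q ^ (n + 1)))) (h.summable.comp_injective inj_even)
      (h.summable.comp_injective inj_odd)
    rw [h.tsum_eq] at h2
    have h3 : ∑' k : ℕ, (((2 * k + 1 : ℕ) : ℂ) + 1) * (q ^ (2 * k + 1 + 1) /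
        (1 - q ^ (2 * k + 1 + 1))) = 2 * lam (q ^ 2) := by
      rw [← ((hasSum_lam' hq2).mul_left 2).tsum_eq]
      refine tsum_congr fun k => ?_
      rw [show 2 * k + 1 + 1 = 2 * (k + 1) by ring, pow_mul]
      push_cast; ring
    rw [(summable_odd1 hq).tsum_prod, ← h2, h3, add_sub_cancel_right]
    refine tsum_congr fun k => ?_
    simp only [pow_mul]
    rw [((hasSum_geom_succ (norm_pow_succ_lt hq (2 * k))).mul_left _).tsum_eq]
    push_cast; rfl
  have e2 : ∑' c : ℕ × ℕ, ((c.2 : ℂ) + 1) * q ^ ((2 * c.1 + 1) * (c.2 + 1)) =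
      lam q - lam (q ^ 2) := by
    have h := lam_summable hq
    have h2 := tsum_even_add_odd (f := fun n : ℕ => q ^ (n + 1) / (1 - q ^ (n + 1)) ^ 2)
      (h.comp_injective inj_even) (h.comp_injective inj_odd)
    have h3 : ∑' k : ℕ, q ^ (2 * k + 1 + 1) / (1 - q ^ (2 * k + 1 + 1)) ^ 2 = lam (q ^ 2) := by
      refine tsum_congr fun k => ?_
      rw [show 2 * k + 1 + 1 = 2 * (k + 1) by ring, pow_mul]
    change _ = lam q at h2
    rw [(summable_odd2 hq).tsum_prod, ← h2, h3, add_sub_cancel_right]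
    refine tsum_congr fun k => ?_
    simp only [pow_mul]
    rw [(hasSum_mul_geom_succ (norm_pow_succ_lt hq (2 * k))).tsum_eq]
  have h := (summable_odd1 hq).tsum_sub ((summable_odd2 hq).mul_left 2)
  rw [tsum_mul_left, e1, e2] at h
  rw [show -lam q = lam q - 2 * lam (q ^ 2) - 2 * (lam q - lam (q ^ 2)) by ring, ← h]
  refine tsum_congr fun c => ?_
  ring

/-- Pairs `(odd a = 2i+1, even 2(b+1))` sorted by size: the smaller one is `n + 1`, and the larger
one is `n + 1 + 2m + 1`. -/
def sortEquiv : ℕ × ℕ ≃ ℕ × ℕ where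
  toFun c := if c.1 ≤ c.2 then (2 * c.1, c.2 - c.1) else (2 * c.2 + 1, c.1 - c.2 - 1)
  invFun c := if c.1 % 2 = 0 then (c.1 / 2, c.1 / 2 + c.2) else (c.1 / 2 + 1 + c.2, c.1 / 2)
  left_inv := by
    rintro ⟨i, b⟩
    by_cases h : i ≤ b
    · simp [h]
    · have h1 : (2 * b + 1) / 2 = b := by omega
      have h2 : (2 * b + 1) % 2 = 1 := by omega
      simp only [h, if_false, h1, h2, one_ne_zero, Prod.mk.injEq, and_true]
      omega
  right_inv := by
    rintro ⟨n, m⟩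
    by_cases h : n % 2 = 0
    · simp [h]; omega
    · have h1 : ¬ (n / 2 + 1 + m ≤ n / 2) := by omega
      simp only [h, if_false, h1, Prod.mk.injEq]
      omega

/-- The `(n, m)` term of the double series obtained from `kSum q 1` (the regular part of the Appell
sum at `y = 1`) by expanding `1 / (1 - q^{n+1})²` in powers of `q`. -/
noncomputable def kt (q : ℂ) (c : ℕ × ℕ) : ℂ :=
  (-1) ^ (c.1 + 1) * (2 * c.1 + 3 + 2 * c.2) *
    q ^ ((c.1 + 1) * (c.1 + 2) / 2 + (c.1 + 1) * c.2)

/-- In the variables of `sortEquiv` the exponent of `q` becomes the product `(2i+1)(b+1)`, and only the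
sign remembers which of `2i+1`, `2(b+1)` is the smaller. -/
theorem kt_sort (q : ℂ) (c : ℕ × ℕ) : kt q (sortEquiv c) = (if c.1 ≤ c.2 then -1 else 1) *
    (2 * c.1 + 1 + (2 * c.2 + 2)) * q ^ ((2 * c.1 + 1) * (c.2 + 1)) := by
  obtain ⟨i, b⟩ := c
  by_cases h : i ≤ b
  · obtain ⟨k, rfl⟩ := Nat.exists_eq_add_of_le h
    have e : (2 * i + 1) * (2 * i + 2) / 2 + (2 * i + 1) * k = (2 * i + 1) * (i + k + 1) := by
      rw [show (2 * i + 1) * (2 * i + 2) = ((2 * i + 1) * (i + 1)) * 2 by ring,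
        Nat.mul_div_cancel _ (by norm_num)]
      ring
    simp only [kt, sortEquiv, Equiv.coe_fn_mk, h, if_true, Nat.add_sub_cancel_left, e]
    rw [pow_succ, pow_mul]
    push_cast; ring
  · obtain ⟨k, rfl⟩ := Nat.exists_eq_add_of_lt (not_le.1 h)
    have e : (2 * b + 1 + 1) * (2 * b + 1 + 2) / 2 + (2 * b + 1 + 1) * k =
        (2 * (b + k + 1) + 1) * (b + 1) := by
      rw [show (2 * b + 1 + 1) * (2 * b + 1 + 2) = ((b + 1) * (2 * b + 3)) * 2 by ring,
        Nat.mul_div_cancel _ (by norm_num)]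
      ring
    have e2 : b + k + 1 - b - 1 = k := by omega
    simp only [kt, sortEquiv, Equiv.coe_fn_mk, h, if_false, e2, e]
    rw [show 2 * b + 1 + 1 = 2 * (b + 1) by ring, pow_mul]
    push_cast; ring

/-- The index `(r, s)` of `F₂^{(2)}` attached to an odd number `2i+1` and an even number `2(b+1)`. -/
def rsMap (c : ℕ × ℕ) : ℕ × ℕ :=
  if c.1 ≤ c.2 then (2 * c.2 + 2, 2 * c.1 + 1) else (2 * c.1 + 1, 2 * c.2 + 2)

theorem rsMap_inj : Function.Injective rsMap := by
  rintro ⟨a, b⟩ ⟨c, d⟩ h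
  simp only [rsMap] at h
  split_ifs at h <;> simp only [Prod.mk.injEq] at h ⊢ <;> omega

/-- The summand of `F₂^{(2)}`. -/
noncomputable def ft (q : ℂ) (p : ℕ × ℕ) : ℂ :=
  if p.2 < p.1 ∧ 0 < p.2 ∧ (p.1 - p.2) % 2 = 1
    then (-1 : ℂ) ^ p.1 * (p.2 : ℂ) * q ^ (p.1 * p.2 / 2) else 0

theorem ft_support (q : ℂ) : Function.support (ft q) ⊆ Set.range rsMap := by
  rintro ⟨r, s⟩ h
  have h1 : s < r ∧ 0 < s ∧ (r - s) % 2 = 1 := by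
    by_contra hc
    exact h (if_neg hc)
  obtain ⟨h1, h2, h3⟩ := h1
  by_cases hr : r % 2 = 0
  · refine ⟨((s - 1) / 2, (r - 2) / 2), ?_⟩
    rw [rsMap, if_pos (by dsimp only; omega)]
    simp only [Prod.mk.injEq]; omega
  · refine ⟨((r - 1) / 2, (s - 2) / 2), ?_⟩
    rw [rsMap, if_neg (by dsimp only; omega)]
    simp only [Prod.mk.injEq]; omega

theorem ft_rs (q : ℂ) (c : ℕ × ℕ) : ft q (rsMap c) =
    (if c.1 ≤ c.2 then 2 * (c.1 : ℂ) + 1 else -(2 * c.2 + 2)) *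
      q ^ ((2 * c.1 + 1) * (c.2 + 1)) := by
  obtain ⟨i, b⟩ := c
  by_cases h : i ≤ b
  · simp only [rsMap, h, if_true, ft]
    rw [if_pos (by omega), show (2 * b + 2) * (2 * i + 1) = ((2 * i + 1) * (b + 1)) * 2 by ring,
      Nat.mul_div_cancel _ (by norm_num), show 2 * b + 2 = 2 * (b + 1) by ring, pow_mul]
    push_cast; ring
  · simp only [rsMap, h, if_false, ft]
    rw [if_pos (by omega), show (2 * i + 1) * (2 * b + 2) = ((2 * i + 1) * (b + 1)) * 2 by ring,
      Nat.mul_div_cancel _ (by norm_num), pow_succ, pow_mul]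
    push_cast; ring

/-- A double series over pairs `(2i+1, b+1)` converges if its coefficients grow at most linearly. -/
theorem summable_bound {q : ℂ} (hq : ‖q‖ < 1) (g : ℕ × ℕ → ℂ)
    (hg : ∀ c, ‖g c‖ ≤ 2 * c.1 + 1 + 2 * (c.2 + 1)) :
    Summable fun c => g c * q ^ ((2 * c.1 + 1) * (c.2 + 1)) := by
  refine Summable.of_norm_bounded
    ((summable_odd1 hq).norm.add ((summable_odd2 hq).norm.mul_left 2)) fun c => ?_
  have e1 : ‖(2 * (c.1 : ℂ) + 1)‖ = 2 * c.1 + 1 := by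
    rw [show (2 * (c.1 : ℂ) + 1) = ((2 * c.1 + 1 : ℕ) : ℂ) by push_cast; ring, Complex.norm_natCast]
    push_cast; ring
  have e2 : ‖((c.2 : ℂ) + 1)‖ = c.2 + 1 := by
    rw [show ((c.2 : ℂ) + 1) = ((c.2 + 1 : ℕ) : ℂ) by push_cast; ring, Complex.norm_natCast]
    push_cast; ring
  rw [norm_mul, norm_mul, norm_mul, e1, e2, ← mul_assoc, ← add_mul]
  exact mul_le_mul_of_nonneg_right (hg c) (norm_nonneg _)

theorem kt_summable {q : ℂ} (hq : ‖q‖ < 1) : Summable (kt q) := by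
  rw [← sortEquiv.summable_iff]
  refine (summable_bound hq _ ?_).congr fun c => (kt_sort q c).symm
  intro c
  have e : ‖(2 * (c.1 : ℂ) + 1 + (2 * c.2 + 2))‖ = 2 * c.1 + 1 + 2 * (c.2 + 1) := by
    rw [show (2 * (c.1 : ℂ) + 1 + (2 * c.2 + 2)) = ((2 * c.1 + 1 + 2 * (c.2 + 1) : ℕ) : ℂ) by
      push_cast; ring, Complex.norm_natCast]
    push_cast; ring
  rw [norm_mul, e]
  split_ifs <;> simp

theorem ft_comp_summable {q : ℂ} (hq : ‖q‖ < 1) : Summable fun c => ft q (rsMap c) := by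
  refine (summable_bound hq _ ?_).congr fun c => (ft_rs q c).symm
  intro c
  split_ifs
  · rw [show (2 * (c.1 : ℂ) + 1) = ((2 * c.1 + 1 : ℕ) : ℂ) by push_cast; ring, Complex.norm_natCast]
    push_cast
    linarith [Nat.cast_nonneg (α := ℝ) c.2]
  · rw [norm_neg, show (2 * (c.2 : ℂ) + 2) = ((2 * c.2 + 2 : ℕ) : ℂ) by push_cast; ring,
      Complex.norm_natCast]
    push_cast
    linarith [Nat.cast_nonneg (α := ℝ) c.1]

/-- The arithmetic identity that makes `F₂^{(2)}` appear: after sorting, the terms `±(a + b)` of `kt`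
(`a` odd, `b` even) and `±2 min(a, b)` of `2 F₂^{(2)}` add up to `a - b` for either order of `a` and
`b`, so `odd_sum` applies. -/
theorem kt_add_ft {q : ℂ} (hq : ‖q‖ < 1) : ∑' c, kt q c + 2 * ∑' c, ft q c = -lam q := by
  have s1 : Summable fun c => kt q (sortEquiv c) :=
    (kt_summable hq).comp_injective sortEquiv.injective
  have s2 := (ft_comp_summable hq).mul_left 2
  have h := s1.tsum_add s2
  rw [sortEquiv.tsum_eq (kt q), tsum_mul_left, rsMap_inj.tsum_eq (ft_support q)] at h
  rw [← h, ← odd_sum hq]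
  refine tsum_congr fun c => ?_
  rw [kt_sort, ft_rs]
  split_ifs <;> ring

theorem tsum_kt {q : ℂ} (hq : ‖q‖ < 1) : ∑' c, kt q c =
    ∑' n : ℕ, (-1) ^ (n + 1) * q ^ ((n + 1) * (n + 2) / 2) *
      ((2 * n + 3) - q ^ (n + 1) * (2 * n + 1)) / (1 - q ^ (n + 1)) ^ 2 := by
  rw [(kt_summable hq).tsum_prod]
  refine tsum_congr fun n => ?_
  have hp := norm_pow_succ_lt hq n
  have hp0 := one_sub_pow_ne hq n
  have h1 := (hasSum_geometric_of_norm_lt_one hp).mul_left (2 * (n : ℂ) + 3)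
  have h2 := (hasSum_coe_mul_geometric_of_norm_lt_one hp).mul_left 2
  have h3 := (h1.add h2).mul_left ((-1) ^ (n + 1) * q ^ ((n + 1) * (n + 2) / 2))
  refine Eq.trans ?_ (h3.tsum_eq.trans ?_)
  · refine tsum_congr fun m => ?_
    simp only [kt]
    rw [pow_add q, pow_mul]
    ring
  · field_simp
    ring

/-! ### The Appell sum -/

/-- The bilateral Appell sum `∑ (-1)^l y^l q^{l(l+1)/2} / (1 - y q^l)`. -/
noncomputable def apSum (q y : ℂ) : ℂ :=
  ∑' l : ℤ, (-1 : ℂ) ^ l * y ^ l * q ^ (l * (l + 1) / 2) / (1 - y * q ^ l)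

/-- Quasi-periodicity of the Appell sum, from shifting `l` by one. -/
theorem apSum_shift {q y : ℂ} (hq0 : q ≠ 0) (hy : y ≠ 0) :
    apSum q (y * q) = -(y * q)⁻¹ * apSum q y := by
  rw [apSum, apSum, ← tsum_mul_left, ← (Equiv.subRight (1 : ℤ)).tsum_eq]
  refine tsum_congr fun l => ?_
  have e : (l - 1) + (l - 1) * (l - 1 + 1) / 2 = l * (l + 1) / 2 - 1 := by
    rw [show l * (l + 1) = (l - 1) * (l - 1 + 1) + l * 2 by ring,
      Int.add_mul_ediv_right _ _ (by norm_num)]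
    ring
  have e1 : y * q * q ^ (l - 1) = y * q ^ l := by
    rw [mul_assoc, ← zpow_one_add₀ hq0]; congr 2; ring
  simp only [Equiv.subRight_apply]
  rw [e1, mul_zpow, show ∀ a b c d : ℂ, a * (b * c) * d = a * b * (c * d) by intros; ring,
    ← zpow_add₀ hq0, e, zpow_sub_one₀ hq0, zpow_sub_one₀ hy, zpow_sub_one₀ (by norm_num)]
  field_simp

/-- The palindromic sum `∑_{j=-n}^{n} y^j`. -/
noncomputable def pal (n : ℕ) (y : ℂ) : ℂ :=
  1 + ∑ j ∈ Finset.range n, (y ^ (j + 1) + y⁻¹ ^ (j + 1))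

theorem pal_mul {y : ℂ} (hy : y ≠ 0) (n : ℕ) :
    (1 - y⁻¹) * pal n y = y ^ n - y⁻¹ ^ (n + 1) := by
  induction n with
  | zero => simp [pal]
  | succ n ih =>
    have : pal (n + 1) y = pal n y + (y ^ (n + 1) + y⁻¹ ^ (n + 1)) := by
      rw [pal, pal, Finset.sum_range_succ]; ring
    rw [this, mul_add, ih]
    have e : y⁻¹ * y = 1 := inv_mul_cancel₀ hy
    linear_combination (-y ^ n) * e

theorem pal_one (n : ℕ) : pal n 1 = 2 * n + 1 := by
  simp [pal]; ring

theorem pal_norm_le {y : ℂ} {ρ : ℝ} (hρ : 1 ≤ ρ) (h1 : ‖y‖ ≤ ρ) (h2 : ‖y⁻¹‖ ≤ ρ) (n : ℕ) :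
    ‖pal n y‖ ≤ (2 * n + 1) * ρ ^ n := by
  have hb : ∀ j ∈ Finset.range n, ‖y ^ (j + 1) + y⁻¹ ^ (j + 1)‖ ≤ 2 * ρ ^ n := by
    intro j hj
    have hj' : j + 1 ≤ n := Finset.mem_range.1 hj
    have a1 : ‖y ^ (j + 1)‖ ≤ ρ ^ n := by
      rw [norm_pow]
      exact (pow_le_pow_left₀ (norm_nonneg _) h1 _).trans (pow_le_pow_right₀ hρ hj')
    have a2 : ‖y⁻¹ ^ (j + 1)‖ ≤ ρ ^ n := by
      rw [norm_pow]
      exact (pow_le_pow_left₀ (norm_nonneg _) h2 _).trans (pow_le_pow_right₀ hρ hj')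
    linarith [norm_add_le (y ^ (j + 1)) (y⁻¹ ^ (j + 1))]
  have := Finset.sum_le_sum hb
  rw [Finset.sum_const, Finset.card_range, nsmul_eq_mul] at this
  have h3 := norm_sum_le (Finset.range n) fun j => y ^ (j + 1) + y⁻¹ ^ (j + 1)
  have h4 := norm_add_le 1 (∑ j ∈ Finset.range n, (y ^ (j + 1) + y⁻¹ ^ (j + 1)))
  rw [norm_one] at h4
  have h5 : 1 ≤ ρ ^ n := one_le_pow₀ hρ
  rw [pal]
  linarith

/-- The sum of the terms `l = n + 1` and `l = -(n + 1)` of the Appell sum, divided by `1 - y⁻¹`. -/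
noncomputable def kn (q : ℂ) (n : ℕ) (y : ℂ) : ℂ :=
  (-1) ^ (n + 1) * q ^ ((n + 1) * (n + 2) / 2) * (pal (n + 1) y - q ^ (n + 1) * pal n y) /
    ((1 - y * q ^ (n + 1)) * (1 - y⁻¹ * q ^ (n + 1)))

/-- The part of the Appell sum that is regular at `y = 1`. -/
noncomputable def kSum (q y : ℂ) : ℂ := ∑' n, kn q n y

theorem norm_mul_pow_succ_le {q y : ℂ} (hq : ‖q‖ < 1) (n : ℕ) :
    ‖y * q ^ (n + 1)‖ ≤ ‖y * q‖ := by
  rw [pow_succ', ← mul_assoc, norm_mul, norm_pow]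
  exact mul_le_of_le_one_right (norm_nonneg _) (pow_le_one₀ (norm_nonneg _) hq.le)

theorem le_norm_one_sub {q y : ℂ} {σ : ℝ} (hq : ‖q‖ < 1) (hy : ‖y * q‖ ≤ σ) (n : ℕ) :
    1 - σ ≤ ‖1 - y * q ^ (n + 1)‖ := by
  have h1 := norm_sub_norm_le (1 : ℂ) (y * q ^ (n + 1))
  have := norm_mul_pow_succ_le (y := y) hq n
  rw [norm_one] at h1
  linarith

theorem one_sub_mul_ne {q y : ℂ} (hq : ‖q‖ < 1) (hy : ‖y * q‖ < 1) (n : ℕ) :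
    1 - y * q ^ (n + 1) ≠ 0 := by
  rw [← norm_pos_iff]
  have := le_norm_one_sub (y := y) hq le_rfl n
  linarith

theorem tri_half (n : ℕ) : (n + 1) * (n + 2) / 2 = (n + 1) + n * (n + 1) / 2 := by
  rw [show (n + 1) * (n + 2) = n * (n + 1) + (n + 1) * 2 by ring, Nat.add_mul_div_right _ _ (by norm_num),
    add_comm]

/-- Convergence of the half `l > 0` of the Appell sum; at `y⁻¹` it gives the half `l < 0`. -/
theorem half_summable {q y : ℂ} (hq : ‖q‖ < 1) (hy : ‖y * q‖ < 1) :
    Summable fun n : ℕ => (-1) ^ (n + 1) * y ^ (n + 1) * q ^ ((n + 1) * (n + 2) / 2) /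
      (1 - y * q ^ (n + 1)) := by
  have hs := ((summable_geometric_of_lt_one (norm_nonneg (y * q)) hy).mul_right
    (‖y * q‖ / (1 - ‖y * q‖)))
  refine Summable.of_norm_bounded hs fun n => ?_
  have h1 := le_norm_one_sub hq le_rfl (y := y) n
  have h2 : 0 < 1 - ‖y * q‖ := by linarith
  have h3 : ‖q ^ (n * (n + 1) / 2)‖ ≤ 1 := by
    rw [norm_pow]; exact pow_le_one₀ (norm_nonneg _) hq.le
  rw [tri_half, pow_add q (n + 1), show ∀ a b c d : ℂ, a * b * (c * d) = a * (b * c) * d by intros; ring,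
    ← mul_pow, norm_div, norm_mul, norm_mul, norm_pow, norm_neg, norm_one, one_pow, one_mul,
    norm_pow, ← mul_div_assoc, ← pow_succ]
  refine div_le_div₀ (by positivity) ?_ h2 h1
  exact mul_le_of_le_one_right (by positivity) h3

/-- Near `y = 1` the Appell sum is its polar term `l = 0` plus a multiple of `1 - y⁻¹`: pairing `l` with
`-l` produces differences `y^n - y^{-n-1}`, each divisible by `1 - y⁻¹`. -/
theorem apSum_eq {q y : ℂ} (hq : ‖q‖ < 1) (hq0 : q ≠ 0) (hy : y ≠ 0) (h1 : ‖y * q‖ < 1)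
    (h2 : ‖y⁻¹ * q‖ < 1) : apSum q y = 1 / (1 - y) + (1 - y⁻¹) * kSum q y := by
  set f : ℤ → ℂ := fun l => (-1 : ℂ) ^ l * y ^ l * q ^ (l * (l + 1) / 2) / (1 - y * q ^ l)
    with hf
  have hpos : ∀ n : ℕ, f ((n + 1 : ℕ) : ℤ) = (-1) ^ (n + 1) * y ^ (n + 1) *
      q ^ ((n + 1) * (n + 2) / 2) / (1 - y * q ^ (n + 1)) := by
    intro n
    have e : ((n + 1 : ℕ) : ℤ) * (((n + 1 : ℕ) : ℤ) + 1) / 2 =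
        (((n + 1) * (n + 2) / 2 : ℕ) : ℤ) := by
      push_cast; congr 1
    simp only [hf, e, zpow_natCast]
  have hneg : ∀ n : ℕ, f (-((n : ℤ) + 1)) = -y⁻¹ * ((-1) ^ (n + 1) * y⁻¹ ^ (n + 1) *
      q ^ ((n + 1) * (n + 2) / 2) / (1 - y⁻¹ * q ^ (n + 1))) := by
    intro n
    have e : (-((n : ℤ) + 1)) * (-((n : ℤ) + 1) + 1) / 2 = ((n * (n + 1) / 2 : ℕ) : ℤ) := by
      push_cast; congr 1; ring
    have e2 : ∀ a : ℂ, a ^ (-((n : ℤ) + 1)) = (a ^ (n + 1))⁻¹ := by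
      intro a
      rw [zpow_neg]; norm_cast
    have e3 : 1 - y * (q ^ (n + 1))⁻¹ = -(y * (q ^ (n + 1))⁻¹) * (1 - y⁻¹ * q ^ (n + 1)) := by
      field_simp; ring
    have e4 : ((-1 : ℂ) ^ (n + 1))⁻¹ = (-1) ^ (n + 1) := by
      rw [← inv_pow]; norm_num
    have h0 := one_sub_mul_ne hq h2 n
    simp only [hf]
    rw [e, e2, e2, e2, e3, e4, zpow_natCast, tri_half, pow_add q (n + 1), inv_pow]
    field_simp
  have s1 := half_summable hq h1
  have s2 := (half_summable hq h2).mul_left (-y⁻¹)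
  have s1' : Summable fun n : ℕ => f n := by
    rw [← summable_nat_add_iff 1]
    exact s1.congr fun n => (hpos n).symm
  have s2' : Summable fun n : ℕ => f (-((n : ℤ) + 1)) := s2.congr fun n => (hneg n).symm
  have h := tsum_of_nat_of_neg_add_one s1' s2'
  have hf0 : f ((0 : ℕ) : ℤ) = 1 / (1 - y) := by simp [hf]
  rw [s1'.tsum_eq_zero_add, hf0, add_assoc] at h
  simp only [hpos, hneg] at h
  rw [← s1.tsum_add s2] at h
  change apSum q y = _ at h
  rw [h, kSum, ← tsum_mul_left]
  congr 1
  refine tsum_congr fun n => ?_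
  have a1 := one_sub_mul_ne hq h1 n
  have a2 := one_sub_mul_ne hq h2 n
  have p1 := pal_mul hy (n + 1)
  have p2 := pal_mul hy n
  have e : y⁻¹ * y = 1 := inv_mul_cancel₀ hy
  rw [kn, ← mul_div_assoc, ← mul_div_assoc, div_add_div _ _ a1 a2]
  congr 1
  linear_combination (exp := 1) (-(-1) ^ (n + 1) * q ^ ((n + 1) * (n + 2) / 2)) * p1 +
    ((-1) ^ (n + 1) * q ^ ((n + 1) * (n + 2) / 2) * q ^ (n + 1)) * p2 +
    ((-1) ^ (n + 1) * q ^ ((n + 1) * (n + 2) / 2) * q ^ (n + 1) * (y⁻¹ ^ (n + 1) - y ^ n)) * e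

theorem kSum_one {q : ℂ} (hq : ‖q‖ < 1) : kSum q 1 = ∑' c, kt q c := by
  rw [tsum_kt hq, kSum]
  refine tsum_congr fun n => ?_
  simp only [kn, pal_one]
  simp only [inv_one, one_mul, ← pow_two]
  push_cast; ring

/-- Both conditions `|y| < ρ` and `|y⁻¹| < ρ` together cut out the annulus `ρ⁻¹ < |y| < ρ`. -/
theorem isOpen_annulus (ρ : ℝ) : IsOpen {y : ℂ | y ≠ 0 ∧ ‖y‖ < ρ ∧ ‖y⁻¹‖ < ρ} := by
  have h1 : ContinuousOn (fun y : ℂ => ‖y⁻¹‖) {0}ᶜ := (continuousOn_inv₀).norm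
  have h2 := h1.isOpen_inter_preimage isOpen_compl_singleton (isOpen_Iio (a := ρ))
  have h3 : IsOpen {y : ℂ | ‖y‖ < ρ} := isOpen_lt continuous_norm continuous_const
  convert! h2.inter h3 using 1
  ext y
  simp only [Set.mem_ofPred_eq, Set.mem_inter_iff, Set.mem_compl_iff, Set.mem_singleton_iff,
    Set.mem_preimage, Set.mem_Iio]
  tauto

theorem kSum_differentiableOn {q : ℂ} (hq : ‖q‖ < 1) {ρ : ℝ} (hρ : 1 ≤ ρ) (hρq : ρ * ‖q‖ < 1) :
    DifferentiableOn ℂ (kSum q) {y | y ≠ 0 ∧ ‖y‖ < ρ ∧ ‖y⁻¹‖ < ρ} := by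
  have hUo := isOpen_annulus ρ
  have hσ : 0 < 1 - ρ * ‖q‖ := by linarith
  have hb1 : ∀ y : ℂ, ‖y‖ < ρ → ‖y * q‖ ≤ ρ * ‖q‖ := fun y hy => by
    rw [norm_mul]; gcongr
  set σ := ρ * ‖q‖ with hσd
  have hσ0 : 0 ≤ σ := by positivity
  have hs : Summable fun n : ℕ => 2 * (2 * ((n + 1 : ℕ) : ℝ) + 1) * σ ^ (n + 1) / (1 - σ) ^ 2 := by
    have h1 := (summable_nat_add_iff 1).2
      (hasSum_coe_mul_geometric_of_norm_lt_one (r := σ)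
        (by rw [Real.norm_of_nonneg hσ0]; linarith)).summable
    have h2 := (summable_nat_add_iff 1).2 (summable_geometric_of_lt_one hσ0 (by linarith))
    refine (((h1.mul_left 4).add (h2.mul_left 2)).div_const ((1 - σ) ^ 2)).congr fun n => ?_
    ring
  refine Complex.differentiableOn_tsum_of_summable_norm hs (fun n y hy => ?_) hUo fun n y hy => ?_
  · have hy0 : y ≠ 0 := hy.1
    have a1 := one_sub_mul_ne hq ((hb1 y hy.2.1).trans_lt hρq) n
    have a2 := one_sub_mul_ne hq ((hb1 _ hy.2.2).trans_lt hρq) n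
    refine DifferentiableAt.differentiableWithinAt ?_
    have hp : ∀ m, DifferentiableAt ℂ (pal m) y := by
      intro m
      unfold pal
      fun_prop (disch := assumption)
    unfold kn
    have := hp n
    have := hp (n + 1)
    have hd : (1 - y * q ^ (n + 1)) * (1 - y⁻¹ * q ^ (n + 1)) ≠ 0 := mul_ne_zero a1 a2
    fun_prop (disch := assumption)
  · have a1 := le_norm_one_sub hq (hb1 y hy.2.1) n
    have a2 := le_norm_one_sub hq (hb1 _ hy.2.2) n
    have p1 := pal_norm_le hρ hy.2.1.le hy.2.2.le (n + 1)
    have p2 := pal_norm_le hρ hy.2.1.le hy.2.2.le n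
    have h3 : ‖q ^ (n * (n + 1) / 2)‖ ≤ 1 := by
      rw [norm_pow]; exact pow_le_one₀ (norm_nonneg _) hq.le
    have h4 : ‖q ^ (n + 1)‖ ≤ 1 := (norm_pow_succ_lt hq n).le
    have p3 : (2 * (n : ℝ) + 1) * ρ ^ n ≤ (2 * ((n + 1 : ℕ) : ℝ) + 1) * ρ ^ (n + 1) := by
      push_cast
      have := pow_le_pow_right₀ hρ (Nat.le_succ n)
      gcongr
      linarith
    have p4 : ‖pal (n + 1) y - q ^ (n + 1) * pal n y‖ ≤
        2 * (2 * ((n + 1 : ℕ) : ℝ) + 1) * ρ ^ (n + 1) := by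
      have b1 := norm_sub_le (pal (n + 1) y) (q ^ (n + 1) * pal n y)
      have b2 : ‖q ^ (n + 1) * pal n y‖ ≤ ‖pal n y‖ := by
        rw [norm_mul]; exact mul_le_of_le_one_left (norm_nonneg _) h4
      linarith
    have h5 : ‖q ^ ((n + 1) * (n + 2) / 2)‖ ≤ ‖q‖ ^ (n + 1) := by
      rw [tri_half, pow_add, norm_mul, norm_pow q (n + 1)]
      exact mul_le_of_le_one_right (by positivity) h3
    rw [kn, norm_div, norm_mul, norm_mul, norm_mul, norm_pow, norm_neg, norm_one, one_pow, one_mul]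
    refine div_le_div₀ (by positivity) ?_ (by positivity) ?_
    · calc _ ≤ ‖q‖ ^ (n + 1) * (2 * (2 * ((n + 1 : ℕ) : ℝ) + 1) * ρ ^ (n + 1)) := by gcongr
        _ = _ := by rw [hσd, mul_pow]; ring
    · rw [pow_two]
      exact mul_le_mul a1 a2 hσ.le (norm_nonneg _)

/-! ### The function `Sf` on the annulus -/

/-- The geometric sequence `a qⁿ`. -/
noncomputable def gs (q a : ℂ) (n : ℕ) : ℂ := a * q ^ n

/-- The theta quotient `∏ (1 + y a qⁿ)(1 + y⁻¹ a qⁿ) / (1 + a qⁿ)²` as an entire function of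
`w = 2 - y - y⁻¹`. -/
noncomputable def W (q a : ℂ) : ℂ → ℂ := wprod (cf (gs q a))

theorem gs_summable {q : ℂ} (hq : ‖q‖ < 1) (a : ℂ) : Summable fun n => ‖gs q a n‖ :=
  summable_norm_mul_pow hq a

theorem one_add_gs_ne {q a : ℂ} (hq : ‖q‖ < 1) (ha : ‖a‖ < 1) (n : ℕ) : 1 + gs q a n ≠ 0 := by
  intro h
  have h1 : gs q a n = -1 := by linear_combination h
  have h2 : ‖gs q a n‖ ≤ ‖a‖ := by
    rw [gs, norm_mul, norm_pow]
    exact mul_le_of_le_one_right (norm_nonneg _) (pow_le_one₀ (norm_nonneg _) hq.le)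
  rw [h1, norm_neg, norm_one] at h2
  linarith

theorem W_zero (q a : ℂ) : W q a 0 = 1 := wprod_zero _

theorem W_differentiable {q : ℂ} (hq : ‖q‖ < 1) (a : ℂ) : Differentiable ℂ (W q a) :=
  wprod_differentiable (cf_summable (gs_summable hq a))

theorem W_hasDerivAt {q : ℂ} (hq : ‖q‖ < 1) (a : ℂ) :
    HasDerivAt (W q a) (∑' n, cf (gs q a) n) 0 :=
  wprod_hasDerivAt (cf_summable (gs_summable hq a))

theorem sum_cf_one {q : ℂ} : ∑' n, cf (gs q (-q)) n = lam q := by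
  refine tsum_congr fun n => ?_
  rw [cf, gs, pow_succ']
  ring

/-- The coefficients belonging to `θ₂, θ₃, θ₄` sum to `3 ∑ σ₁(n) qⁿ`: by
`-p/(1+p)² = 4p²/(1-p²)² - p/(1-p)²` the `θ₂` part is `4 lam(q²) - lam(q)`, and `θ₃`, `θ₄` together give
`4 (lam(q) - lam(q²))`. -/
theorem sum_cf_even {q h : ℂ} (hq : ‖q‖ < 1) (hh : h ^ 2 = q) :
    ∑' n, cf (gs q q) n + (∑' n, cf (gs q h) n + ∑' n, cf (gs q (-h)) n) = 3 * lam q := by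
  have hq2 : ‖q ^ 2‖ < 1 := norm_pow_succ_lt hq 1
  have hh1 : ‖h‖ < 1 := by
    rw [← hh, norm_pow] at hq
    exact (pow_lt_one_iff_of_nonneg (norm_nonneg _) two_ne_zero).1 hq
  have e1 : ∑' n, cf (gs q q) n = 4 * lam (q ^ 2) - lam q := by
    rw [lam, lam, ← tsum_mul_left,
      ← ((lam_summable hq2).mul_left 4).tsum_sub (lam_summable hq)]
    refine tsum_congr fun n => ?_
    have h1 := one_add_gs_ne hq hq n
    have h2 := one_sub_pow_ne hq n
    have h3 : 1 + q ^ (n + 1) ≠ 0 := by simpa [gs, pow_succ'] using h1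
    have h4 : 1 - (q ^ 2) ^ (n + 1) = (1 - q ^ (n + 1)) * (1 + q ^ (n + 1)) := by
      rw [← pow_mul, mul_comm 2, pow_mul]; ring
    rw [h4, cf, gs, ← pow_succ', ← pow_mul, mul_comm 2, pow_mul]
    field_simp
    ring
  have e2 : ∑' n, cf (gs q h) n + ∑' n, cf (gs q (-h)) n = 4 * (lam q - lam (q ^ 2)) := by
    have hs := lam_summable hq
    have h2 := tsum_even_add_odd (f := fun n : ℕ => q ^ (n + 1) / (1 - q ^ (n + 1)) ^ 2)
      (hs.comp_injective inj_even) (hs.comp_injective inj_odd)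
    have h3 : ∑' k : ℕ, q ^ (2 * k + 1 + 1) / (1 - q ^ (2 * k + 1 + 1)) ^ 2 = lam (q ^ 2) := by
      refine tsum_congr fun k => ?_
      rw [show 2 * k + 1 + 1 = 2 * (k + 1) by ring, pow_mul]
    change _ = lam q at h2
    rw [← ((cf_summable (gs_summable hq h)).of_norm).tsum_add
      (cf_summable (gs_summable hq (-h))).of_norm, ← h2, h3, add_sub_cancel_right,
      ← tsum_mul_left]
    refine tsum_congr fun n => ?_
    have a1 := one_add_gs_ne hq hh1 n
    have a2 := one_add_gs_ne (a := -h) hq (by rwa [norm_neg]) n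
    have a3 : q ^ (2 * n + 1) = gs q h n ^ 2 := by
      rw [gs, mul_pow, hh, ← pow_mul]; ring
    have a4 : gs q (-h) n = -gs q h n := by rw [gs, gs]; ring
    have a5 : 1 - gs q h n ^ 2 = (1 + gs q h n) * (1 + -gs q h n) := by ring
    rw [a4] at a2
    rw [a3, cf, cf, a4, a5]
    field_simp
    ring
  rw [e1, e2]; ring

/-- The entire function of `w = 2 - y - y⁻¹` with value `8 ∑ (θ_i(z)/θ_i(0))² - 24 W q (-q) w`. The
second term removes the value at `w = 0`; it comes from the polar term of the Appell sum. -/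
noncomputable def Nf (q h w : ℂ) : ℂ :=
  8 * ((1 - w / 4) * W q q w ^ 2 + W q h w ^ 2 + W q (-h) w ^ 2) - 24 * W q (-q) w

theorem Nf_zero (q h : ℂ) : Nf q h 0 = 0 := by
  simp only [Nf, W_zero]; norm_num

theorem Nf_differentiable {q : ℂ} (hq : ‖q‖ < 1) (h : ℂ) : Differentiable ℂ (Nf q h) := by
  have h1 := W_differentiable hq q
  have h2 := W_differentiable hq h
  have h3 := W_differentiable hq (-h)
  have h4 := W_differentiable hq (-q)
  unfold Nf
  fun_prop

theorem Nf_hasDerivAt {q h : ℂ} (hq : ‖q‖ < 1) (hh : h ^ 2 = q) :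
    HasDerivAt (Nf q h) (24 * lam q - 2) 0 := by
  have h1 := W_hasDerivAt hq q
  have h2 := W_hasDerivAt hq h
  have h3 := W_hasDerivAt hq (-h)
  have h4 := W_hasDerivAt hq (-q)
  have h0 : HasDerivAt (fun w : ℂ => 1 - w / 4) (-(1 / 4)) 0 :=
    ((hasDerivAt_id (0 : ℂ)).div_const 4).const_sub 1
  have := ((((h0.mul (h1.pow 2)).add (h2.pow 2)).add (h3.pow 2)).const_mul 8).sub
    (h4.const_mul 24)
  refine this.congr_deriv ?_
  have e := sum_cf_even hq hh
  rw [sum_cf_one]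
  simp only [Pi.pow_apply, W_zero]
  norm_num
  linear_combination 16 * e

/-- The quantity that has to vanish, as a function of `y` on the annulus `|q| < |y| < |q|⁻¹`; the
removable singularity at `y = 1` has been filled in by `dslope`. -/
noncomputable def Sf (q h y : ℂ) : ℂ :=
  dslope (Nf q h) 0 (2 - y - y⁻¹) / W q (-q) (2 - y - y⁻¹) ^ 2 -
    24 * kSum q y / W q (-q) (2 - y - y⁻¹) + 2 * (1 - 24 * lam q) - 48 * ∑' c, ft q c

/-- At `y = 1` the value is a combination of Lambert series, and the choice of `H` makes it vanish. -/
theorem Sf_one {q h : ℂ} (hq : ‖q‖ < 1) (hh : h ^ 2 = q) : Sf q h 1 = 0 := by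
  have e : (2 - 1 - (1 : ℂ)⁻¹) = 0 := by norm_num
  rw [Sf, e, dslope_same, (Nf_hasDerivAt hq hh).deriv, W_zero, kSum_one hq]
  linear_combination (-24) * kt_add_ft hq

/-- The factors of `W q (-q)` are `(1 - y qⁿ)(1 - y⁻¹ qⁿ)/(1 - qⁿ)²`, nonzero for `|q| < |y| < |q|⁻¹`. -/
theorem W_ne_zero {q y : ℂ} (hq : ‖q‖ < 1) (hy : y ≠ 0) (h1 : ‖y * q‖ < 1) (h2 : ‖y⁻¹ * q‖ < 1) :
    W q (-q) (2 - y - y⁻¹) ≠ 0 := by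
  refine wprod_ne_zero (cf_summable (gs_summable hq _)) fun n hn => ?_
  have h := one_add_cf (one_add_gs_ne (a := -q) hq (by rwa [norm_neg]) n) hy
  rw [hn, mul_zero] at h
  have e : ∀ x : ℂ, 1 + x * gs q (-q) n = 1 - x * q ^ (n + 1) := by
    intro x; rw [gs]; ring
  rw [e, e] at h
  exact mul_ne_zero (one_sub_mul_ne hq h1 n) (one_sub_mul_ne hq h2 n) h.symm

theorem Sf_differentiableAt {q y : ℂ} (h : ℂ) (hq : ‖q‖ < 1) (hq0 : q ≠ 0) (hy : y ≠ 0)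
    (h1 : ‖y * q‖ < 1) (h2 : ‖y⁻¹ * q‖ < 1) : DifferentiableAt ℂ (Sf q h) y := by
  have hqp : 0 < ‖q‖ := norm_pos_iff.2 hq0
  rw [norm_mul, ← lt_div_iff₀ hqp] at h1 h2
  -- A smaller annulus around `y` on which the series `kSum` converges uniformly.
  obtain ⟨ρ, hρ1, hρ2⟩ := exists_between (max_lt h1 h2)
  obtain ⟨r1, r2⟩ := max_lt_iff.1 hρ1
  have hρ : 1 ≤ ρ := by
    by_contra! hc
    have e : ‖y‖ * ‖y⁻¹‖ = 1 := by rw [← norm_mul, mul_inv_cancel₀ hy, norm_one]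
    nlinarith [norm_nonneg y, norm_nonneg y⁻¹]
  have hk : DifferentiableAt ℂ (kSum q) y :=
    (kSum_differentiableOn hq hρ ((lt_div_iff₀ hqp).1 hρ2)).differentiableAt
      ((isOpen_annulus ρ).mem_nhds ⟨hy, r1, r2⟩)
  have hd : Differentiable ℂ (dslope (Nf q h) 0) := by
    rw [← differentiableOn_univ]
    exact (Complex.differentiableOn_dslope Filter.univ_mem).2
      (Nf_differentiable hq h).differentiableOn
  have hw : DifferentiableAt ℂ (fun y : ℂ => 2 - y - y⁻¹) y := by fun_prop (disch := assumption)
  have hW : DifferentiableAt ℂ (fun y : ℂ => W q (-q) (2 - y - y⁻¹)) y :=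
    (W_differentiable hq (-q) _).fun_comp' y hw
  have hD : DifferentiableAt ℂ (fun y : ℂ => dslope (Nf q h) 0 (2 - y - y⁻¹)) y :=
    (hd _).fun_comp' y hw
  have hne := W_ne_zero hq hy (by rwa [norm_mul, ← lt_div_iff₀ hqp])
    (by rwa [norm_mul, ← lt_div_iff₀ hqp])
  have hne2 := pow_ne_zero 2 hne
  unfold Sf
  fun_prop (disch := assumption)

/-! ### Theta functions and elliptic transformations -/

theorem qc_ne (z : ℂ) : qc z ≠ 0 := Complex.exp_ne_zero _

theorem qc_add (z w : ℂ) : qc (z + w) = qc z * qc w := by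
  rw [qc, qc, qc, ← Complex.exp_add]; ring_nf

theorem qc_zero : qc 0 = 1 := by simp [qc]

theorem qc_intCast (n : ℤ) : qc n = 1 := by
  rw [qc, Complex.exp_eq_one_iff]; exact ⟨n, by ring⟩

theorem norm_qc (z : ℂ) : ‖qc z‖ = Real.exp (-(2 * Real.pi * z.im)) := by
  rw [qc, Complex.norm_exp]
  simp

theorem qc_eq_one {z : ℂ} (h : qc z = 1) : ∃ n : ℤ, z = n := by
  rw [qc, Complex.exp_eq_one_iff] at h
  obtain ⟨n, hn⟩ := h
  refine ⟨n, mul_left_cancel₀ Complex.two_pi_I_ne_zero ?_⟩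
  linear_combination hn

theorem norm_qc_lt {τ : ℂ} (hτ : 0 < τ.im) : ‖qc τ‖ < 1 := by
  rw [norm_qc, Real.exp_lt_one_iff]
  have := Real.pi_pos
  have : 0 < 2 * Real.pi * τ.im := by positivity
  linarith

/-- `e^{πiz}`, the square root of `qc z` fixed in the theta functions. -/
noncomputable def hc (z : ℂ) : ℂ := Complex.exp (Real.pi * Complex.I * z)

theorem hc_ne (z : ℂ) : hc z ≠ 0 := Complex.exp_ne_zero _

theorem hc_sq (z : ℂ) : hc z ^ 2 = qc z := by
  rw [hc, qc, ← Complex.exp_nat_mul]; push_cast; ring_nf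

theorem hc_add (z w : ℂ) : hc (z + w) = hc z * hc w := by
  rw [hc, hc, hc, ← Complex.exp_add]; ring_nf

theorem norm_hc_lt {τ : ℂ} (hτ : 0 < τ.im) : ‖hc τ‖ < 1 := by
  have := norm_qc_lt hτ
  rw [← hc_sq, norm_pow] at this
  exact (pow_lt_one_iff_of_nonneg (norm_nonneg _) two_ne_zero).1 this

/-- The exponentials `q^{n+1/2}` in `θ₃` and `θ₄`. -/
theorem half_exp (τ : ℂ) (n : ℕ) :
    Complex.exp (2 * Real.pi * Complex.I * ((n : ℂ) + 1 / 2) * τ) = hc τ * qc τ ^ n := by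
  rw [hc, qc, ← Complex.exp_nat_mul, ← Complex.exp_add]; ring_nf

/-- `q^{1/8}`, with the branch `e^{πiτ/4}`. -/
noncomputable def e8 (τ : ℂ) : ℂ := Complex.exp (Real.pi * Complex.I * τ / 4)

theorem theta1_tri (τ z : ℂ) : theta1 τ z = -Complex.I * e8 τ * hc z * tri (qc τ) (qc z) := rfl

theorem theta2_tri (τ z : ℂ) : theta2 τ z = e8 τ * hc z * tri (qc τ) (-qc z) := by
  rw [theta2, tri, e8, hc]
  congr 1
  refine tprod_congr fun n => ?_
  rw [inv_neg]; ring

theorem theta3_gs (τ z : ℂ) : theta3 τ z = ∏' n : ℕ, ((1 - qc τ ^ (n + 1)) *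
    (1 + qc z * gs (qc τ) (hc τ) n) * (1 + (qc z)⁻¹ * gs (qc τ) (hc τ) n)) := by
  rw [theta3]
  refine tprod_congr fun n => ?_
  rw [half_exp, gs]

theorem theta4_gs (τ z : ℂ) : theta4 τ z = ∏' n : ℕ, ((1 - qc τ ^ (n + 1)) *
    (1 + qc z * gs (qc τ) (-hc τ) n) * (1 + (qc z)⁻¹ * gs (qc τ) (-hc τ) n)) := by
  rw [theta4]
  refine tprod_congr fun n => ?_
  rw [half_exp, gs]; ring

theorem gs_tri {q h y : ℂ} (hh : h ^ 2 = q) (hh0 : h ≠ 0) :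
    ∏' n : ℕ, ((1 - q ^ (n + 1)) * (1 + y * gs q h n) * (1 + y⁻¹ * gs q h n)) =
      tri q (-(y / h)) := by
  rw [tri]
  refine tprod_congr fun n => ?_
  have e1 : -(y / h) * q ^ (n + 1) = -(y * gs q h n) := by
    rw [gs, pow_succ', ← hh]; field_simp
  have e2 : (-(y / h))⁻¹ * q ^ n = -(y⁻¹ * gs q h n) := by
    rw [gs, inv_neg, inv_div]; ring
  rw [e1, e2]; ring

theorem theta3_tri (τ z : ℂ) : theta3 τ z = tri (qc τ) (-(qc z / hc τ)) := by
  rw [theta3_gs, gs_tri (hc_sq τ) (hc_ne τ)]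

theorem theta4_tri (τ z : ℂ) : theta4 τ z = tri (qc τ) (qc z / hc τ) := by
  rw [theta4_gs, gs_tri (by rw [neg_sq, hc_sq]) (neg_ne_zero.2 (hc_ne τ)), div_neg, neg_neg]

/-- The automorphy factor `q^{-1/2} y^{-1}`, common up to sign to the theta functions, for `z ↦ z + τ`. -/
noncomputable def kap (τ z : ℂ) : ℂ := (hc τ * qc z)⁻¹

theorem kap_ne (τ z : ℂ) : kap τ z ≠ 0 := inv_ne_zero (mul_ne_zero (hc_ne τ) (qc_ne z))

theorem theta1_shift {τ : ℂ} (hτ : 0 < τ.im) (z : ℂ) :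
    theta1 τ (z + τ) = -kap τ z * theta1 τ z := by
  have := hc_ne τ
  have := qc_ne z
  rw [theta1_tri, theta1_tri, qc_add, tri_shift (norm_qc_lt hτ) (qc_ne τ) (qc_ne z), hc_add, kap,
    ← hc_sq τ]
  field_simp

theorem theta2_shift {τ : ℂ} (hτ : 0 < τ.im) (z : ℂ) :
    theta2 τ (z + τ) = kap τ z * theta2 τ z := by
  have := hc_ne τ
  have := qc_ne z
  rw [theta2_tri, theta2_tri, qc_add, ← neg_mul,
    tri_shift (norm_qc_lt hτ) (qc_ne τ) (neg_ne_zero.2 (qc_ne z)), hc_add, kap, ← hc_sq τ]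
  field_simp

theorem theta3_shift {τ : ℂ} (hτ : 0 < τ.im) (z : ℂ) :
    theta3 τ (z + τ) = kap τ z * theta3 τ z := by
  have h1 := hc_ne τ
  have h2 := qc_ne z
  rw [theta3_tri, theta3_tri, qc_add, mul_div_right_comm, ← neg_mul,
    tri_shift (norm_qc_lt hτ) (qc_ne τ) (neg_ne_zero.2 (div_ne_zero h2 h1)), kap, ← hc_sq τ]
  field_simp

theorem theta4_shift {τ : ℂ} (hτ : 0 < τ.im) (z : ℂ) :
    theta4 τ (z + τ) = -kap τ z * theta4 τ z := by
  have h1 := hc_ne τ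
  have h2 := qc_ne z
  rw [theta4_tri, theta4_tri, qc_add, mul_div_right_comm,
    tri_shift (norm_qc_lt hτ) (qc_ne τ) (div_ne_zero h2 h1), kap, ← hc_sq τ]
  field_simp

theorem appellMu_eq (τ z : ℂ) :
    appellMu τ z = -Complex.I * hc z / theta1 τ z * apSum (qc τ) (qc z) := rfl

theorem appellMu_shift {τ : ℂ} (hτ : 0 < τ.im) (z : ℂ) :
    appellMu τ (z + τ) = appellMu τ z := by
  have h1 := hc_ne τ
  have h2 := qc_ne z
  rw [appellMu_eq, appellMu_eq, theta1_shift hτ, hc_add, qc_add, apSum_shift (qc_ne τ) (qc_ne z),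
    kap, ← hc_sq τ]
  field_simp

/-- The claimed identity at `(τ, z)`. -/
def Claim (τ z : ℂ) : Prop :=
  8 * ((theta2 τ z / theta2 τ 0) ^ 2 + (theta3 τ z / theta3 τ 0) ^ 2 +
      (theta4 τ z / theta4 τ 0) ^ 2) =
    theta1 τ z ^ 2 / eta τ ^ 3 *
      (24 * appellMu τ z + (-2 * E2 τ + 48 * F2two τ) / eta τ ^ 3)

/-- Both sides of the identity are multiplied by `kap τ z ^ 2` under `z ↦ z + τ`. -/
theorem claim_shift {τ : ℂ} (hτ : 0 < τ.im) (z : ℂ) : Claim τ (z + τ) ↔ Claim τ z := by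
  have hk := pow_ne_zero 2 (kap_ne τ z)
  rw [Claim, theta1_shift hτ, theta2_shift hτ, theta3_shift hτ, theta4_shift hτ,
    appellMu_shift hτ, Claim]
  constructor
  · intro h
    refine mul_left_cancel₀ hk ?_
    linear_combination h
  · intro h
    linear_combination kap τ z ^ 2 * h

theorem claim_shift_int {τ : ℂ} (hτ : 0 < τ.im) (z : ℂ) (n : ℤ) :
    Claim τ (z + n * τ) ↔ Claim τ z := by
  induction n with
  | zero => simp
  | succ n ih =>
    rw [← ih, ← claim_shift hτ (z + (n : ℤ) * τ)]; push_cast; ring_nf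
  | pred n ih =>
    rw [← ih, ← claim_shift hτ]; push_cast; ring_nf

/-- The quotient form of the identity, normalised to be invariant under `z ↦ z + τ`. -/
noncomputable def Tf (τ z : ℂ) : ℂ :=
  8 * ((theta2 τ z / theta2 τ 0) ^ 2 + (theta3 τ z / theta3 τ 0) ^ 2 +
      (theta4 τ z / theta4 τ 0) ^ 2) * eta τ ^ 6 / theta1 τ z ^ 2 -
    24 * eta τ ^ 3 * appellMu τ z + 2 * E2 τ - 48 * F2two τ

/-- This also holds at the zeros of `θ₁`, where both sides are computed with division by zero. -/
theorem Tf_shift {τ : ℂ} (hτ : 0 < τ.im) (z : ℂ) : Tf τ (z + τ) = Tf τ z := by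
  have hk := pow_ne_zero 2 (kap_ne τ z)
  rw [Tf, theta1_shift hτ, theta2_shift hτ, theta3_shift hτ, theta4_shift hτ,
    appellMu_shift hτ, Tf]
  congr 3
  rw [mul_pow (-kap τ z), neg_sq, ← mul_div_mul_left _ (theta1 τ z ^ 2) hk]
  congr 1
  ring

theorem eta_cube (τ : ℂ) : eta τ ^ 3 = e8 τ * poch (qc τ) (qc τ) ^ 3 := by
  rw [eta, mul_pow, ← Complex.exp_nat_mul, e8, poch]
  congr 2
  · push_cast; ring
  · refine tprod_congr fun n => ?_
    rw [pow_succ']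

theorem poch_self_ne {q : ℂ} (hq : ‖q‖ < 1) : poch q q ≠ 0 := by
  have := tprod_one_add_ne_zero_of_summable (f := fun n : ℕ => - (q * q ^ n)) (fun n h => ?_)
    (by simpa using summable_norm_mul_pow hq q)
  · simpa [poch, sub_eq_add_neg] using this
  · exact one_sub_pow_ne hq n (by rw [pow_succ']; linear_combination h)

theorem eta_ne {τ : ℂ} (hτ : 0 < τ.im) : eta τ ≠ 0 := by
  have h : eta τ ^ 3 ≠ 0 := by
    rw [eta_cube]
    exact mul_ne_zero (Complex.exp_ne_zero _) (pow_ne_zero _ (poch_self_ne (norm_qc_lt hτ)))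
  exact fun h0 => h (by rw [h0]; norm_num)

theorem c0_neg {q : ℂ} (hq : ‖q‖ < 1) : c0 q (gs q (-q)) = poch q q ^ 3 := by
  have h := tprod_three hq q q
  rw [c0, show poch q q ^ 3 = poch q q * poch q q * poch q q by ring, ← h]
  refine tprod_congr fun n => ?_
  rw [gs]; ring

theorem theta1_eq {τ : ℂ} (hτ : 0 < τ.im) (z : ℂ) :
    theta1 τ z = -Complex.I * hc z * (1 - (qc z)⁻¹) * eta τ ^ 3 *
      W (qc τ) (-qc τ) (2 - qc z - (qc z)⁻¹) := by
  have hq := norm_qc_lt hτ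
  have h := sym_prod hq (gs_summable hq (-qc τ))
    (one_add_gs_ne hq (by rwa [norm_neg])) (qc_ne z)
  rw [c0_neg hq] at h
  rw [theta1_tri, tri_split hq, eta_cube, W,
    show ∀ a b c d e f : ℂ, a * b * c * (d * e) * f = a * d * b * c * (e * f) by intros; ring, ← h]
  have e : ∀ (x : ℂ) (n : ℕ), 1 + x * gs (qc τ) (-qc τ) n = 1 - x * qc τ ^ (n + 1) := by
    intro x n; rw [gs]; ring
  simp only [e]
  ring

theorem theta2_eq {τ : ℂ} (hτ : 0 < τ.im) (z : ℂ) :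
    theta2 τ z = e8 τ * hc z * (1 + (qc z)⁻¹) * c0 (qc τ) (gs (qc τ) (qc τ)) *
      W (qc τ) (qc τ) (2 - qc z - (qc z)⁻¹) := by
  have hq := norm_qc_lt hτ
  have h := sym_prod hq (gs_summable hq (qc τ)) (one_add_gs_ne hq hq) (qc_ne z)
  rw [theta2_tri, tri_split hq, W, mul_assoc _ (c0 _ _), ← h]
  have e : ∀ (x : ℂ) (n : ℕ), 1 + x * gs (qc τ) (qc τ) n = 1 - -x * qc τ ^ (n + 1) := by
    intro x n; rw [gs]; ring
  simp only [e, inv_neg]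
  ring

/-! ### Comparison with `Sf` -/

theorem two_sub_one : (2 - 1 - (1 : ℂ)⁻¹) = 0 := by norm_num

theorem ratio2 {τ : ℂ} (hτ : 0 < τ.im) (z : ℂ) : (theta2 τ z / theta2 τ 0) ^ 2 =
    (1 - (2 - qc z - (qc z)⁻¹) / 4) * W (qc τ) (qc τ) (2 - qc z - (qc z)⁻¹) ^ 2 := by
  have hq := norm_qc_lt hτ
  have h0 := c0_ne_zero hq (gs_summable hq (qc τ)) (one_add_gs_ne hq hq)
  have h1 : e8 τ ≠ 0 := Complex.exp_ne_zero _
  have h2 : hc 0 = 1 := by simp [hc]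
  have h3 := qc_ne z
  rw [theta2_eq hτ, theta2_eq hτ, qc_zero, two_sub_one, W_zero, h2, inv_one]
  have e : e8 τ * hc z * (1 + (qc z)⁻¹) * c0 (qc τ) (gs (qc τ) (qc τ)) *
      W (qc τ) (qc τ) (2 - qc z - (qc z)⁻¹) / (e8 τ * 1 * (1 + 1) *
        c0 (qc τ) (gs (qc τ) (qc τ)) * 1) =
      hc z * ((1 + (qc z)⁻¹) * W (qc τ) (qc τ) (2 - qc z - (qc z)⁻¹) / 2) := by
    rw [div_eq_iff (by simp [h0, h1])]; ring
  rw [e, mul_pow, hc_sq]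
  generalize W (qc τ) (qc τ) (2 - qc z - (qc z)⁻¹) = w
  field_simp
  ring

theorem ratio3 {τ : ℂ} (hτ : 0 < τ.im) (z : ℂ) : theta3 τ z / theta3 τ 0 =
    W (qc τ) (hc τ) (2 - qc z - (qc z)⁻¹) := by
  have hq := norm_qc_lt hτ
  have h1 := one_add_gs_ne hq (norm_hc_lt hτ)
  have h0 := c0_ne_zero hq (gs_summable hq (hc τ)) h1
  rw [theta3_gs, theta3_gs, sym_prod hq (gs_summable hq _) h1 (qc_ne z),
    sym_prod hq (gs_summable hq _) h1 (qc_ne 0), qc_zero, two_sub_one, wprod_zero, mul_one,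
    mul_div_cancel_left₀ _ h0, W]

theorem ratio4 {τ : ℂ} (hτ : 0 < τ.im) (z : ℂ) : theta4 τ z / theta4 τ 0 =
    W (qc τ) (-hc τ) (2 - qc z - (qc z)⁻¹) := by
  have hq := norm_qc_lt hτ
  have h1 := one_add_gs_ne (a := -hc τ) hq (by rw [norm_neg]; exact norm_hc_lt hτ)
  have h0 := c0_ne_zero hq (gs_summable hq (-hc τ)) h1
  rw [theta4_gs, theta4_gs, sym_prod hq (gs_summable hq _) h1 (qc_ne z),
    sym_prod hq (gs_summable hq _) h1 (qc_ne 0), qc_zero, two_sub_one, wprod_zero, mul_one,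
    mul_div_cancel_left₀ _ h0, W]

theorem E2_eq {τ : ℂ} (hτ : 0 < τ.im) : E2 τ = 1 - 24 * lam (qc τ) := by
  rw [E2, lam_sigma (norm_qc_lt hτ)]

theorem F2two_eq (τ : ℂ) : F2two τ = ∑' c, ft (qc τ) c := rfl

theorem annulus {τ z : ℂ} (hz : |z.im| < τ.im) :
    ‖qc z * qc τ‖ < 1 ∧ ‖(qc z)⁻¹ * qc τ‖ < 1 := by
  obtain ⟨h1, h2⟩ := abs_lt.1 hz
  have hp := Real.pi_pos
  rw [norm_mul, norm_mul, norm_inv, norm_qc, norm_qc, ← Real.exp_neg, ← Real.exp_add,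
    ← Real.exp_add, Real.exp_lt_one_iff, Real.exp_lt_one_iff]
  constructor <;> nlinarith

theorem theta1_ne {τ z : ℂ} (hτ : 0 < τ.im) (hz : |z.im| < τ.im) (h1 : qc z ≠ 1) :
    theta1 τ z ≠ 0 := by
  obtain ⟨a1, a2⟩ := annulus hz
  rw [theta1_eq hτ]
  have hW := W_ne_zero (norm_qc_lt hτ) (qc_ne z) a1 a2
  have h2 : 1 - (qc z)⁻¹ ≠ 0 := by
    rw [sub_ne_zero, ne_comm, ne_eq, inv_eq_one]; exact h1
  have := eta_ne hτ
  have := hc_ne z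
  simp [*]

/-- In the strip `|Im z| < Im τ`, away from `z ∈ ℤ`, the quotient form is the holomorphic function `Sf`;
the pole of `24 μ` at `z = 0` cancels against `8 · 3 / θ₁²`. -/
theorem Tf_eq_Sf {τ z : ℂ} (hτ : 0 < τ.im) (hz : |z.im| < τ.im) (h1 : qc z ≠ 1) :
    Tf τ z = Sf (qc τ) (hc τ) (qc z) := by
  have hq := norm_qc_lt hτ
  obtain ⟨a1, a2⟩ := annulus hz
  have hth := theta1_ne hτ hz h1
  have hW := W_ne_zero hq (qc_ne z) a1 a2
  have hη := eta_ne hτ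
  have hh := hc_ne z
  have hy := qc_ne z
  have hw : 2 - qc z - (qc z)⁻¹ = (1 - qc z) * (1 - (qc z)⁻¹) := by field_simp; ring
  have hy1 : 1 - qc z ≠ 0 := sub_ne_zero.2 h1.symm
  have hy2 : 1 - (qc z)⁻¹ ≠ 0 := by
    rw [sub_ne_zero, ne_comm, ne_eq, inv_eq_one]; exact h1
  have hw0 : 2 - qc z - (qc z)⁻¹ ≠ 0 := by rw [hw]; exact mul_ne_zero hy1 hy2
  have hsq : theta1 τ z ^ 2 = eta τ ^ 6 * (2 - qc z - (qc z)⁻¹) *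
      W (qc τ) (-qc τ) (2 - qc z - (qc z)⁻¹) ^ 2 := by
    rw [theta1_eq hτ]
    generalize W (qc τ) (-qc τ) (2 - qc z - (qc z)⁻¹) = w
    simp only [mul_pow, neg_sq, Complex.I_sq, hc_sq]
    field_simp
    ring
  have hmu : eta τ ^ 3 * appellMu τ z = (1 / (2 - qc z - (qc z)⁻¹) + kSum (qc τ) (qc z)) /
      W (qc τ) (-qc τ) (2 - qc z - (qc z)⁻¹) := by
    rw [appellMu_eq, apSum_eq hq (qc_ne τ) (qc_ne z) a1 a2, theta1_eq hτ]
    have hI := Complex.I_ne_zero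
    rw [eq_div_iff hW]
    generalize W (qc τ) (-qc τ) (2 - qc z - (qc z)⁻¹) = w at *
    rw [hw]
    generalize (qc z)⁻¹ = x at *
    field_simp
  have hds : dslope (Nf (qc τ) (hc τ)) 0 (2 - qc z - (qc z)⁻¹) =
      Nf (qc τ) (hc τ) (2 - qc z - (qc z)⁻¹) / (2 - qc z - (qc z)⁻¹) := by
    rw [dslope_of_ne _ hw0, slope_def_field, Nf_zero, sub_zero, sub_zero]
  rw [Tf, Sf, ratio2 hτ, ratio3 hτ, ratio4 hτ, hsq, mul_assoc 24, hmu, E2_eq hτ, F2two_eq, hds, Nf]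
  generalize 2 - qc z - (qc z)⁻¹ = w at *
  field_simp
  ring

/-! ### Vanishing -/

/-- `Sf` inherits the invariance under `z ↦ z + τ` from `Tf` when both points lie in the strip; the
hypotheses keep both of them away from the real axis, where `Tf` has its exceptional points. -/
theorem Sf_shift {τ z : ℂ} (h1 : -τ.im < z.im) (h2 : z.im < 0) :
    Sf (qc τ) (hc τ) (qc (z + τ)) = Sf (qc τ) (hc τ) (qc z) := by
  have hτ : 0 < τ.im := by linarith
  have hne : ∀ x : ℂ, x.im ≠ 0 → qc x ≠ 1 := by
    intro x hx h
    obtain ⟨n, rfl⟩ := qc_eq_one h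
    simp at hx
  have i : (z + τ).im = z.im + τ.im := Complex.add_im _ _
  rw [← Tf_eq_Sf hτ (abs_lt.2 ⟨by linarith, by linarith⟩) (hne _ (by linarith)),
    ← Tf_eq_Sf hτ (abs_lt.2 ⟨by linarith, by linarith⟩) (hne _ h2.ne), Tf_shift hτ]

/-- Liouville's theorem on the torus `ℂ/(ℤ + ℤτ)`: `|Sf|` attains its maximum over the strip on the
compact rectangle `[0,1] × [-Im τ/2, Im τ/2]`, so the maximum principle makes `Sf` constant. -/
theorem Sf_eq_zero {τ z : ℂ} (hτ : 0 < τ.im) (hz : |z.im| < τ.im) :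
    Sf (qc τ) (hc τ) (qc z) = 0 := by
  have hq := norm_qc_lt hτ
  set g : ℂ → ℂ := fun z => Sf (qc τ) (hc τ) (qc z) with hg
  set U : Set ℂ := {z | -τ.im < z.im} ∩ {z | z.im < τ.im} with hU
  have hUo : IsOpen U := (isOpen_lt continuous_const Complex.continuous_im).inter
    (isOpen_lt Complex.continuous_im continuous_const)
  have hUc : IsPreconnected U :=
    ((convex_halfSpace_im_gt _).inter (convex_halfSpace_im_lt _)).isPreconnected
  have hgd : DifferentiableOn ℂ g U := by
    intro x hx
    obtain ⟨a1, a2⟩ := annulus (τ := τ) (z := x) (abs_lt.2 hx)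
    have hqd : DifferentiableAt ℂ qc x := by unfold qc; fun_prop
    exact ((Sf_differentiableAt (hc τ) hq (qc_ne τ) (qc_ne x) a1 a2).comp x
      hqd).differentiableWithinAt
  set K : Set ℂ := Set.Icc 0 1 ×ℂ Set.Icc (-(τ.im / 2)) (τ.im / 2) with hK
  have hKc : IsCompact K := isCompact_Icc.reProdIm isCompact_Icc
  have hKU : K ⊆ U := by
    rintro x ⟨-, h1, h2⟩
    exact ⟨by simp only [Set.mem_ofPred_eq]; linarith, by simp only [Set.mem_ofPred_eq]; linarith⟩
  have hper : ∀ (x : ℂ) (n : ℤ), g (x + n) = g x := by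
    intro x n
    simp only [hg, qc_add, qc_intCast, mul_one]
  have hmid : ∀ x : ℂ, |x.im| ≤ τ.im / 2 → ∃ x' ∈ K, g x' = g x := by
    intro x hx
    refine ⟨x + (-⌊x.re⌋ : ℤ), ⟨?_, ?_⟩, hper _ _⟩
    · simp only [Set.mem_preimage, Set.mem_Icc, Complex.add_re, Complex.intCast_re]
      push_cast
      constructor <;> linarith [Int.floor_le x.re, Int.lt_floor_add_one x.re]
    · simpa using abs_le.1 hx
  -- Outside the middle half of the strip, first translate by `±τ`.
  have hred : ∀ x ∈ U, ∃ x' ∈ K, g x' = g x := by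
    rintro x ⟨h1, h2⟩
    simp only [Set.mem_ofPred_eq] at h1 h2
    by_cases c1 : x.im < -(τ.im / 2)
    · rw [← show g (x + τ) = g x from Sf_shift h1 (by linarith)]
      exact hmid _ (abs_le.2 ⟨by rw [Complex.add_im]; linarith, by rw [Complex.add_im]; linarith⟩)
    by_cases c2 : τ.im / 2 < x.im
    · have h3 : g (x - τ + τ) = g (x - τ) :=
        Sf_shift (by rw [Complex.sub_im]; linarith) (by rw [Complex.sub_im]; linarith)
      rw [sub_add_cancel] at h3
      rw [h3]
      exact hmid _ (abs_le.2 ⟨by rw [Complex.sub_im]; linarith, by rw [Complex.sub_im]; linarith⟩)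
    · exact hmid _ (abs_le.2 ⟨by linarith, by linarith⟩)
  have hK0 : (0 : ℂ) ∈ K := by
    refine ⟨by simp, ?_⟩
    simp only [Set.mem_preimage, Set.mem_Icc, Complex.zero_im]
    constructor <;> linarith
  obtain ⟨x0, hx0, hmax⟩ := hKc.exists_isMaxOn ⟨0, hK0⟩ (hgd.continuousOn.mono hKU).norm
  have hmaxU : IsMaxOn (norm ∘ g) U x0 := by
    intro x hx
    obtain ⟨x', hx', e⟩ := hred x hx
    have := hmax hx'
    simp only [Set.mem_ofPred_eq, Function.comp] at this ⊢
    rwa [← e]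
  have hconst := Complex.eqOn_of_isPreconnected_of_isMaxOn_norm hUc hUo hgd (hKU hx0) hmaxU
  have e0 : g 0 = 0 := by
    simp only [hg, qc_zero]
    exact Sf_one hq (hc_sq τ)
  have e1 := hconst (abs_lt.1 hz : z ∈ U)
  have e2 := hconst (hKU hK0)
  exact e1.trans (e2.symm.trans e0)

theorem claim_strip {τ z : ℂ} (hτ : 0 < τ.im) (hz : |z.im| < τ.im) (h1 : qc z ≠ 1) :
    Claim τ z := by
  have h := (Tf_eq_Sf hτ hz h1).trans (Sf_eq_zero hτ hz)
  have hth := theta1_ne hτ hz h1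
  have hη := eta_ne hτ
  rw [Tf] at h
  rw [Claim]
  generalize (theta2 τ z / theta2 τ 0) ^ 2 + (theta3 τ z / theta3 τ 0) ^ 2 +
      (theta4 τ z / theta4 τ 0) ^ 2 = X at *
  field_simp at h ⊢
  linear_combination h

/-- the decomposition of the K3 elliptic genus into N=4 characters:
for `τ ∈ ℍ` and `z ∉ ℤτ + ℤ`,
`8((θ₂(τ,z)/θ₂(τ,0))² + (θ₃(τ,z)/θ₃(τ,0))² + (θ₄(τ,z)/θ₄(τ,0))²)
  = (θ₁(τ,z)²/η(τ)³)(24μ(τ,z) + H(τ))` with `H = (-2E₂ + 48F₂^{(2)})/η³`. -/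
theorem stmt_15 (τ z : ℂ) (hτ : 0 < τ.im) (hz : ∀ m n : ℤ, z ≠ m * τ + n) :
    8 * ((theta2 τ z / theta2 τ 0) ^ 2 + (theta3 τ z / theta3 τ 0) ^ 2 +
        (theta4 τ z / theta4 τ 0) ^ 2) =
      theta1 τ z ^ 2 / eta τ ^ 3 *
        (24 * appellMu τ z + (-2 * E2 τ + 48 * F2two τ) / eta τ ^ 3) := by
  -- Translate `z` by a multiple of `τ` into `0 ≤ Im z < Im τ`.
  have key : Claim τ (z + (-⌊z.im / τ.im⌋ : ℤ) * τ) := by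
    refine claim_strip hτ ?_ fun h => ?_
    · have h1 := (le_div_iff₀ hτ).1 (Int.floor_le (z.im / τ.im))
      have h2 := (div_lt_iff₀ hτ).1 (Int.lt_floor_add_one (z.im / τ.im))
      have e : (z + ((-⌊z.im / τ.im⌋ : ℤ) : ℂ) * τ).im = z.im - ⌊z.im / τ.im⌋ * τ.im := by
        simp [sub_eq_add_neg]
      rw [e, abs_lt]
      constructor <;> linarith
    · obtain ⟨n, hn⟩ := qc_eq_one h
      refine hz ⌊z.im / τ.im⌋ n ?_
      push_cast at hn
      linear_combination hn
  exact (claim_shift_int hτ z _).1 key
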